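/- The holomorphic quadratic parabolic germ g(z) = z + z² has no antiholomorphic square root: there do not exist open neighborhoods V ⊆ U of 0 in ℂ and a holomorphic function h on U with h(0) = 0 such that, setting f = σ ∘ h (i.e. f(z) = conj(h(z))), one has f(z) ∈ U and f(f(z)) = z + z² for all z ∈ V. -/

import Mathlib

/-!
Write `g z = z + z²`, `f = conj ∘ h`, and let `c n = g^[n] (-1/2)` be the critical orbit, a real
sequence increasing to `0`. From `f ∘ f = g` it follows that `f`, and hence `h` (as `g` has real
coefficients), commutes with `g` near `0`, and that `h' 0 ≠ 0`.

The key point (`exists_critical_orbit_shift`) is that `h` has to shift the critical orbit: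
`h (c (a + i)) = c (b + i)` for some `a`, `b` and all `i`. Then `f (f (c (2 * a))) = c (2 * b)`,
while `f ∘ f = g` gives `c (2 * a + 1)`. The critical orbit is injective, so `2 * b = 2 * a + 1`,
which is impossible.

To see that the critical orbit is shifted, take a small disc `D` about `0` on which `h` commutes
with `g`, and suppose that `z ∈ D` is a critical point of `g^[N]` with `g^[N] z ∈ D`. If
`h ∘ g^[N] = g^[N] ∘ h` near `z`, then differentiating shows that `h z` is also a critical point of
`g^[N]`, that is, both `z` and `h z` are preimages of `-1/2`; pushing forward by `g^[N]` gives the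
shift. The commutation relation is clear at points whose orbit up to time `N` stays in `D`, but the
orbit of `z` leaves `D` to pass through `-1/2`, so the relation has to be continued analytically
along a path in `D` whose image under `g^[N]` also lies in `D`.

Such a path is explicit in the coordinate `w = -1/z`, in which `g` becomes `w ↦ w + 1 + 1/(w - 1)`.
Start with the vertical segment from `1 + i` to `1 + iY`, with `Y` large. Its lower end is a
preimage of `-1/2`; its forward iterates tend to `0` uniformly since `Re w` grows by at least `1`
at each step (`forward_orbit`); and its images under the inverse branch `G` of `g` fixing `0` tend
to `0` uniformly since `Re w` drops by at least `1/2` at each step (`backward_orbit`). Moreover the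
whole two-sided orbit of the upper end stays close to `0`. The path is the image of this segment
under `G^[m]` with `m` large.
-/

open Topology

/-! ### The quadratic map and its inverse branch -/

/-- The quadratic map `z ↦ z + z²`. -/
def quadMap (z : ℂ) : ℂ := z + z ^ 2

/-- The inverse branch of `quadMap` fixing `0`, given by the principal square root. -/
noncomputable def quadInv (z : ℂ) : ℂ := ((1 + 4 * z) ^ ((2 : ℕ) : ℂ)⁻¹ - 1) / 2

lemma quadMap_quadInv (z : ℂ) : quadMap (quadInv z) = z := by
  have h : ((1 + 4 * z) ^ ((2 : ℕ) : ℂ)⁻¹) ^ 2 = 1 + 4 * z :=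
    Complex.cpow_nat_inv_pow _ two_ne_zero
  unfold quadMap quadInv
  linear_combination h / 4

lemma quadMap_iterate_quadInv_iterate (m : ℕ) (z : ℂ) : quadMap^[m] (quadInv^[m] z) = z :=
  (Function.LeftInverse.iterate (f := quadInv) (g := quadMap) quadMap_quadInv m) z

lemma quadInv_im_pos {z : ℂ} (hz : 0 < z.im) : 0 < (quadInv z).im := by
  set s := (1 + 4 * z) ^ ((2 : ℕ) : ℂ)⁻¹ with hs
  have hsq : s ^ 2 = 1 + 4 * z := Complex.cpow_nat_inv_pow _ two_ne_zero
  have him : 2 * s.re * s.im = 4 * z.im := by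
    have := congrArg Complex.im hsq
    simp [pow_two] at this
    linarith
  have hre : 0 ≤ s.re := by
    rw [hs, Complex.cpow_def_of_ne_zero]
    · rw [Complex.exp_re]
      apply mul_nonneg (Real.exp_pos _).le
      have h1 := Complex.arg_le_pi (1 + 4 * z)
      have h2 := Complex.neg_pi_lt_arg (1 + 4 * z)
      have h3 : (Complex.log (1 + 4 * z) * ((2 : ℕ) : ℂ)⁻¹).im
          = Complex.arg (1 + 4 * z) / 2 := by
        have : (((2 : ℕ) : ℂ)⁻¹) = (((1 / 2 : ℝ)) : ℂ) := by push_cast; norm_num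
        rw [this, Complex.im_mul_ofReal, Complex.log_im]
        ring
      rw [h3]
      apply Real.cos_nonneg_of_neg_pi_div_two_le_of_le <;> linarith
    · intro h0
      have := congrArg Complex.im h0
      simp at this
      linarith
  have : 0 < s.im := by
    by_contra hneg
    nlinarith
  have hq : quadInv z = (s - 1) / 2 := rfl
  rw [hq]
  simpa using this

lemma continuousAt_quadInv {z : ℂ} (hz : 0 < z.im) : ContinuousAt quadInv z := by
  unfold quadInv
  have h : (1 + 4 * z) ∈ Complex.slitPlane := by
    right
    simp
    linarith
  have h2 : ContinuousAt (fun z : ℂ => (1 + 4 * z) ^ ((2 : ℕ) : ℂ)⁻¹) z :=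
    ContinuousAt.cpow (by fun_prop) continuousAt_const h
  exact (h2.sub continuousAt_const).div_const 2

/-! ### Orbits in the coordinate `w = -1/z` -/

/-- In the coordinate `w = -1/z`, `quadMap` is `w ↦ w + 1 + 1/(w - 1)`. -/
lemma quadMap_neg_inv {w : ℂ} (h0 : w ≠ 0) (h1 : w ≠ 1) :
    quadMap (-w⁻¹) = -(w + 1 + (w - 1)⁻¹)⁻¹ := by
  have h2 : w - 1 ≠ 0 := sub_ne_zero.mpr h1
  have h3 : w + 1 + (w - 1)⁻¹ = w ^ 2 / (w - 1) := by
    field_simp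
    ring
  rw [h3, quadMap]
  field_simp
  ring

/-- Forward orbits in the coordinate `w = -1/z`: starting from `Re w = 1`, `Im w = y ≥ 1`, the real
part grows at least linearly, and `Re w + Im w` never decreases. -/
lemma forward_orbit {y : ℝ} (hy : 1 ≤ y) (n : ℕ) :
    ∃ w : ℂ, quadMap^[n] (-(⟨1, y⟩ : ℂ)⁻¹) = -w⁻¹ ∧ (n : ℝ) + 1 ≤ w.re ∧
      1 ≤ Complex.normSq (w - 1) ∧ 1 + y ≤ w.re + w.im := by
  induction n with
  | zero =>
    refine ⟨⟨1, y⟩, rfl, by simp, ?_, le_rfl⟩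
    simp [Complex.normSq_apply]
    nlinarith
  | succ n ih =>
    obtain ⟨w, h1, h2, h3, h4⟩ := ih
    have hn : (0 : ℝ) ≤ n := n.cast_nonneg
    have hw0 : w ≠ 0 := by
      rintro rfl
      simp at h2
      linarith
    have hw1 : w ≠ 1 := by
      rintro rfl
      simp at h3
      linarith
    have hN : 0 < Complex.normSq (w - 1) := by linarith
    have hNdef := Complex.normSq_apply (w - 1)
    have e1 : (w - 1)⁻¹.re = (w.re - 1) / Complex.normSq (w - 1) := by
      simp [Complex.inv_re]
    have e2 : (w - 1)⁻¹.im = -w.im / Complex.normSq (w - 1) := by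
      simp [Complex.inv_im]
    have e1' : 0 ≤ (w - 1)⁻¹.re := by
      rw [e1]
      exact div_nonneg (by linarith) hN.le
    -- `Im (1/v) ≥ -1` because `|v| ≥ 1`
    have e2' : -1 ≤ (w - 1)⁻¹.im := by
      rw [e2, le_div_iff₀ hN]
      simp at hNdef
      nlinarith [sq_nonneg (w.re - 1), sq_nonneg (w.im - 1), sq_nonneg w.im]
    refine ⟨w + 1 + (w - 1)⁻¹, ?_, ?_, ?_, ?_⟩
    · rw [Function.iterate_succ_apply', h1, quadMap_neg_inv hw0 hw1]
    · simp only [Complex.add_re, Complex.one_re]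
      push_cast
      linarith
    · rw [Complex.normSq_apply]
      have : 1 ≤ (w + 1 + (w - 1)⁻¹ - 1).re := by
        simp only [Complex.add_re, Complex.one_re, Complex.sub_re] at e1' ⊢
        linarith
      nlinarith [mul_self_nonneg (w + 1 + (w - 1)⁻¹ - 1).im]
    · simp only [Complex.add_re, Complex.one_re, Complex.add_im, Complex.one_im]
      linarith

/-- One step of the inverse branch in the coordinate `w = -1/z`. -/
lemma backward_step {w : ℂ} (hw : 1 ≤ w.im) :
    ∃ u : ℂ, quadInv (-w⁻¹) = -u⁻¹ ∧ w.im ≤ u.im ∧ u.re ≤ w.re - 1 / 2 := by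
  have hw0 : w ≠ 0 := by
    rintro rfl
    simp at hw
    linarith
  have hz : 0 < (-w⁻¹).im := by
    have : (-w⁻¹).im = w.im / Complex.normSq w := by
      simp [Complex.inv_im, neg_div]
    rw [this]
    exact div_pos (by linarith) (Complex.normSq_pos.mpr hw0)
  have hq := quadInv_im_pos hz
  have hgq := quadMap_quadInv (-w⁻¹)
  set q := quadInv (-w⁻¹) with hqdef
  have hq0 : q ≠ 0 := by
    intro h
    rw [h] at hq
    simp at hq
  set u := -q⁻¹ with hu
  have hqu : q = -u⁻¹ := by simp [hu]
  have hui : 0 < u.im := by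
    have : u.im = q.im / Complex.normSq q := by
      simp [hu, Complex.inv_im, neg_div]
    rw [this]
    exact div_pos hq (Complex.normSq_pos.mpr hq0)
  have hu0 : u ≠ 0 := by
    intro h
    rw [h] at hui
    simp at hui
  have hu1 : u ≠ 1 := by
    intro h
    rw [h] at hui
    simp at hui
  have hwu : w = u + 1 + (u - 1)⁻¹ := by
    rw [hqu, quadMap_neg_inv hu0 hu1] at hgq
    exact (inv_injective (neg_injective hgq)).symm
  have hNdef := Complex.normSq_apply (u - 1)
  have hN : 0 < Complex.normSq (u - 1) := Complex.normSq_pos.mpr (sub_ne_zero.mpr hu1)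
  have e1 : (u - 1)⁻¹.re = (u.re - 1) / Complex.normSq (u - 1) := by
    simp [Complex.inv_re]
  have e2 : (u - 1)⁻¹.im = -(u.im / Complex.normSq (u - 1)) := by
    simp [Complex.inv_im, neg_div]
  have him : w.im ≤ u.im := by
    have := congrArg Complex.im hwu
    simp only [Complex.add_im, Complex.one_im, e2] at this
    have := div_nonneg hui.le hN.le
    linarith
  refine ⟨u, hqu, him, ?_⟩
  -- `|Re (1/v)| ≤ 1/2` as soon as `Im v ≥ 1`
  have e1' : -(1 / 2) ≤ (u - 1)⁻¹.re := by
    rw [e1, le_div_iff₀ hN]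
    simp at hNdef
    nlinarith [sq_nonneg (u.re - 1 + 1)]
  have := congrArg Complex.re hwu
  simp only [Complex.add_re, Complex.one_re] at this
  linarith

/-- Backward orbits in the coordinate `w = -1/z`: starting from `Re w = 1`, `Im w = y ≥ 1`, the
imaginary part never decreases and the real part tends to `-∞` at least linearly. -/
lemma backward_orbit {y : ℝ} (hy : 1 ≤ y) (m : ℕ) :
    ∃ u : ℂ, quadInv^[m] (-(⟨1, y⟩ : ℂ)⁻¹) = -u⁻¹ ∧ y ≤ u.im ∧ u.re ≤ 1 - m / 2 := by
  induction m with
  | zero => exact ⟨⟨1, y⟩, rfl, le_rfl, by simp⟩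
  | succ m ih =>
    obtain ⟨u, h1, h2, h3⟩ := ih
    obtain ⟨v, k1, k2, k3⟩ := backward_step (hy.trans h2)
    refine ⟨v, ?_, h2.trans k2, ?_⟩
    · rw [Function.iterate_succ_apply', h1, k1]
    · push_cast
      linarith

lemma quadInv_iterate_im_pos {y : ℝ} (hy : 1 ≤ y) (m : ℕ) :
    0 < (quadInv^[m] (-(⟨1, y⟩ : ℂ)⁻¹)).im := by
  obtain ⟨u, h1, h2, -⟩ := backward_orbit hy m
  have hu0 : u ≠ 0 := by
    rintro rfl
    simp at h2
    linarith
  have : (-u⁻¹).im = u.im / Complex.normSq u := by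
    simp [Complex.inv_im, neg_div]
  rw [h1, this]
  exact div_pos (by linarith) (Complex.normSq_pos.mpr hu0)

lemma continuousOn_path (Y : ℝ) (m : ℕ) :
    ContinuousOn (fun y : ℝ => quadInv^[m] (-(⟨1, y⟩ : ℂ)⁻¹)) (Set.Icc 1 Y) := by
  induction m with
  | zero =>
    have h : Continuous fun y : ℝ => (⟨1, y⟩ : ℂ) := by
      have : (fun y : ℝ => (⟨1, y⟩ : ℂ)) = fun y : ℝ => 1 + y * Complex.I := by
        funext y
        apply Complex.ext <;> simp
      rw [this]
      fun_prop
    refine (ContinuousOn.inv₀ h.continuousOn ?_).neg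
    intro y _ h0
    have := congrArg Complex.re h0
    simp at this
  | succ m ih =>
    intro y hy
    simp only [Function.iterate_succ_apply']
    exact ContinuousAt.comp_continuousWithinAt
      (f := fun y : ℝ => quadInv^[m] (-(⟨1, y⟩ : ℂ)⁻¹))
      (continuousAt_quadInv (quadInv_iterate_im_pos hy.1 m)) (ih y hy)

/-! ### Critical points of the iterates and the critical orbit -/

lemma differentiable_quadMap_iterate (n : ℕ) : Differentiable ℂ quadMap^[n] := by
  have : Differentiable ℂ quadMap := by
    unfold quadMap
    fun_prop
  exact this.iterate n

lemma hasDerivAt_quadMap (z : ℂ) : HasDerivAt quadMap (1 + 2 * z) z :=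
  ((hasDerivAt_id' z).fun_add (hasDerivAt_pow 2 z)).congr_deriv (by norm_num)

lemma deriv_quadMap_iterate_succ (n : ℕ) (z : ℂ) :
    deriv quadMap^[n + 1] z = (1 + 2 * quadMap^[n] z) * deriv quadMap^[n] z := by
  rw [Function.iterate_succ']
  exact ((hasDerivAt_quadMap _).comp z (differentiable_quadMap_iterate n z).hasDerivAt).deriv

/-- The critical points of an iterate of `quadMap` are the preimages of `-1/2`. -/
lemma deriv_quadMap_iterate_eq_zero_iff (n : ℕ) (z : ℂ) :
    deriv quadMap^[n] z = 0 ↔ ∃ j < n, quadMap^[j] z = -1 / 2 := by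
  induction n with
  | zero => simp
  | succ n ih =>
    rw [deriv_quadMap_iterate_succ, mul_eq_zero, ih]
    constructor
    · rintro (h | ⟨j, hj, h⟩)
      · exact ⟨n, by omega, by linear_combination h / 2⟩
      · exact ⟨j, by omega, h⟩
    · rintro ⟨j, hj, h⟩
      rcases Nat.lt_succ_iff_lt_or_eq.mp hj with hj | rfl
      · exact Or.inr ⟨j, hj, h⟩
      · left
        rw [h]
        norm_num

/-- The critical orbit is real, strictly increasing and contained in `(-∞, 0)`. -/
lemma critical_orbit_real :
    ∃ x : ℕ → ℝ, StrictMono x ∧ ∀ n, quadMap^[n] (-1 / 2) = (x n : ℂ) := by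
  have hneg : ∀ n : ℕ, (fun t : ℝ => t + t ^ 2)^[n] (-1 / 2) ∈ Set.Ico (-1 / 2 : ℝ) 0 := by
    intro n
    induction n with
    | zero => norm_num
    | succ n ih =>
      rw [Function.iterate_succ_apply']
      obtain ⟨h1, h2⟩ := ih
      constructor <;> nlinarith
  refine ⟨fun n => (fun t : ℝ => t + t ^ 2)^[n] (-1 / 2), strictMono_nat_of_lt_succ ?_, ?_⟩
  · intro n
    simp only [Function.iterate_succ_apply']
    have := pow_pos (neg_pos.mpr (hneg n).2) 2
    linarith [neg_sq ((fun t : ℝ => t + t ^ 2)^[n] (-1 / 2))]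
  · intro n
    induction n with
    | zero => simp
    | succ n ih =>
      simp only [Function.iterate_succ_apply']
      rw [ih, quadMap]
      push_cast
      rfl

/-! ### Analytic continuation of the commutation relation -/

lemma iterate_comm_of_orbit_mem {D : Set ℂ} {h : ℂ → ℂ}
    (hcomm : ∀ z ∈ D, h (quadMap z) = quadMap (h z)) {z : ℂ} (n : ℕ)
    (hz : ∀ j < n, quadMap^[j] z ∈ D) : h (quadMap^[n] z) = quadMap^[n] (h z) := by
  induction n with
  | zero => rfl
  | succ n ih =>
    rw [Function.iterate_succ_apply', Function.iterate_succ_apply', hcomm _ (hz n (by omega)),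
      ih fun j hj => hz j (by omega)]

lemma neg_inv_mem_ball {r : ℝ} (hr : 0 < r) {w : ℂ} (h : 1 / r < ‖w‖) :
    -w⁻¹ ∈ Metric.ball (0 : ℂ) r := by
  rw [mem_ball_zero_iff, norm_neg, norm_inv]
  rw [one_div] at h
  exact inv_lt_of_inv_lt₀ hr h

/-- A holomorphic map of a small disc with nonvanishing derivative that commutes with
`quadMap` shifts the tail of the critical orbit. -/
lemma exists_critical_orbit_shift {r : ℝ} (hr : 0 < r) {h : ℂ → ℂ}
    (hd : DifferentiableOn ℂ h (Metric.ball 0 r))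
    (hcomm : ∀ z ∈ Metric.ball (0 : ℂ) r, h (quadMap z) = quadMap (h z))
    (hder : ∀ z ∈ Metric.ball (0 : ℂ) r, deriv h z ≠ 0) :
    ∃ a b : ℕ, ∀ i, quadMap^[a + i] (-1 / 2) ∈ Metric.ball (0 : ℂ) r ∧
      h (quadMap^[a + i] (-1 / 2)) = quadMap^[b + i] (-1 / 2) := by
  set D := Metric.ball (0 : ℂ) r with hD
  have hr' : 0 < 1 / r := by positivity
  obtain ⟨n₀, hn₀⟩ := exists_nat_gt (1 / r)
  obtain ⟨m, hm⟩ := exists_nat_gt (2 * (1 / r + 1))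
  set Y : ℝ := 2 / r + 1 with hY
  have hYr : Y = 2 * (1 / r) + 1 := by rw [hY]; ring
  have hY1 : 1 ≤ Y := by linarith
  obtain ⟨N, hN⟩ : ∃ N, N = m + n₀ + 2 := ⟨_, rfl⟩
  set path : ℝ → ℂ := fun y => quadInv^[m] (-(⟨1, y⟩ : ℂ)⁻¹) with hpath
  have hfwd : ∀ y, 1 ≤ y → ∀ n, n₀ ≤ n → quadMap^[n] (-(⟨1, y⟩ : ℂ)⁻¹) ∈ D := by
    intro y hy n hn
    obtain ⟨w, h1, h2, -⟩ := forward_orbit hy n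
    rw [h1]
    apply neg_inv_mem_ball hr
    have : (n₀ : ℝ) ≤ n := by exact_mod_cast hn
    linarith [Complex.re_le_norm w]
  have hpathD : ∀ y ∈ Set.Icc 1 Y, path y ∈ D := by
    intro y hy
    obtain ⟨u, h1, h2, h3⟩ := backward_orbit hy.1 m
    simp only [hpath]
    rw [h1]
    apply neg_inv_mem_ball hr
    linarith [(abs_le.mp (Complex.abs_re_le_norm u)).1]
  have hgpath : ∀ y n, m ≤ n → quadMap^[n] (path y) = quadMap^[n - m] (-(⟨1, y⟩ : ℂ)⁻¹) := by
    intro y n hn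
    obtain ⟨k, rfl⟩ := Nat.exists_eq_add_of_le' hn
    rw [Function.iterate_add_apply, quadMap_iterate_quadInv_iterate, Nat.add_sub_cancel]
  have htop : ∀ j, quadMap^[j] (path Y) ∈ D := by
    intro j
    rcases le_total m j with hj | hj
    · rw [hgpath _ _ hj]
      obtain ⟨w, h1, -, -, h4⟩ := forward_orbit hY1 (j - m)
      rw [h1]
      apply neg_inv_mem_ball hr
      linarith [Complex.re_le_norm w, Complex.im_le_norm w]
    · obtain ⟨k, rfl⟩ := Nat.exists_eq_add_of_le hj
      simp only [hpath]
      rw [Function.iterate_add_apply quadInv, quadMap_iterate_quadInv_iterate]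
      obtain ⟨u, h1, h2, -⟩ := backward_orbit hY1 k
      rw [h1]
      apply neg_inv_mem_ball hr
      linarith [Complex.im_le_norm u]
  have han : AnalyticOnNhd ℂ h D := hd.analyticOnNhd Metric.isOpen_ball
  have hgan : ∀ z, AnalyticAt ℂ quadMap^[N] z := fun z =>
    (differentiable_quadMap_iterate N).analyticAt z
  have hcontD : ∀ j, Continuous quadMap^[j] := fun j =>
    (differentiable_quadMap_iterate j).continuous
  set S := path '' Set.Icc 1 Y with hS
  have hSconn : IsPreconnected S := isPreconnected_Icc.image _ (continuousOn_path Y m)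
  have hSD : ∀ z ∈ S, z ∈ D := by
    rintro _ ⟨y, hy, rfl⟩
    exact hpathD y hy
  have hSND : ∀ z ∈ S, quadMap^[N] z ∈ D := by
    rintro _ ⟨y, hy, rfl⟩
    rw [hgpath _ _ (by omega)]
    exact hfwd y hy.1 _ (by omega)
  have hF₁ : AnalyticOnNhd ℂ (fun z => h (quadMap^[N] z)) S := fun z hz =>
    AnalyticAt.comp (han _ (hSND z hz)) (hgan z)
  have hF₂ : AnalyticOnNhd ℂ (fun z => quadMap^[N] (h z)) S := fun z hz =>
    AnalyticAt.comp (g := quadMap^[N]) (hgan _) (han _ (hSD z hz))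
  have hloc : (fun z => h (quadMap^[N] z)) =ᶠ[𝓝 (path Y)] fun z => quadMap^[N] (h z) := by
    have : ∀ᶠ z in 𝓝 (path Y), ∀ j ∈ Finset.range N, quadMap^[j] z ∈ D :=
      (Filter.eventually_all_finset _).mpr fun j _ =>
        (hcontD j).continuousAt.eventually_mem (Metric.isOpen_ball.mem_nhds (htop j))
    filter_upwards [this] with z hz
    exact iterate_comm_of_orbit_mem hcomm N fun j hj => hz j (Finset.mem_range.mpr hj)
  have hYS : path Y ∈ S := ⟨Y, ⟨hY1, le_rfl⟩, rfl⟩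
  have heq := hF₁.eqOn_of_preconnected_of_eventuallyEq hF₂ hSconn hYS hloc
  have heq' := hF₁.deriv.eqOn_of_preconnected_of_eventuallyEq hF₂.deriv hSconn hYS hloc.deriv
  -- the lower end of the path is a preimage of the critical point
  have hcrit : ∀ k, quadMap^[m + 1 + k] (path 1) = quadMap^[k] (-1 / 2) := by
    intro k
    rw [hgpath _ _ (by omega), show m + 1 + k - m = k + 1 by omega, Function.iterate_succ_apply]
    congr 1
    have e : (⟨1, 1⟩ : ℂ) = 1 + Complex.I := by
      apply Complex.ext <;> simp
    have hne : (1 + Complex.I : ℂ) ≠ 0 := by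
      intro h0
      have := congrArg Complex.im h0
      simp at this
    rw [e, quadMap]
    field_simp
    ring_nf
    rw [Complex.I_sq]
    ring
  have h1S : path 1 ∈ S := ⟨1, ⟨le_rfl, hY1⟩, rfl⟩
  have hd1 : deriv quadMap^[N] (path 1) = 0 :=
    (deriv_quadMap_iterate_eq_zero_iff _ _).mpr ⟨m + 1, by omega, hcrit 0⟩
  have hd2 : deriv quadMap^[N] (h (path 1)) = 0 := by
    have hz := heq' h1S
    have hdh := (han _ (hSD _ h1S)).differentiableAt.hasDerivAt
    have e1 := ((han _ (hSND _ h1S)).differentiableAt.hasDerivAt.comp (path 1)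
      (hgan (path 1)).differentiableAt.hasDerivAt).deriv
    have e2 := ((hgan (h (path 1))).differentiableAt.hasDerivAt.comp (path 1) hdh).deriv
    have e3 : deriv h (quadMap^[N] (path 1)) * deriv quadMap^[N] (path 1) =
        deriv quadMap^[N] (h (path 1)) * deriv h (path 1) := by
      rw [← e1, ← e2]
      exact hz
    rw [hd1, mul_zero] at e3
    exact (mul_eq_zero.mp e3.symm).resolve_right (hder _ (hSD _ h1S))
  obtain ⟨j, hj, hj'⟩ := (deriv_quadMap_iterate_eq_zero_iff _ _).mp hd2
  have hcD : ∀ i, quadMap^[n₀ + 1 + i] (-1 / 2) ∈ D := by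
    intro i
    rw [← hcrit, hgpath _ _ (by omega)]
    exact hfwd 1 le_rfl _ (by omega)
  refine ⟨n₀ + 1, N - j, fun i => ⟨hcD i, ?_⟩⟩
  have hbase : h (quadMap^[n₀ + 1] (-1 / 2)) = quadMap^[N - j] (-1 / 2) := by
    rw [← hcrit, show m + 1 + (n₀ + 1) = N by omega, ← hj', ← Function.iterate_add_apply,
      Nat.sub_add_cancel hj.le]
    exact heq h1S
  rw [add_comm (n₀ + 1) i, add_comm (N - j) i, Function.iterate_add_apply _ i (n₀ + 1),
    Function.iterate_add_apply _ i (N - j), ← hbase]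
  refine iterate_comm_of_orbit_mem hcomm i fun k _ => ?_
  rw [← Function.iterate_add_apply, add_comm]
  exact hcD k

/-! ### Nonexistence of the square root -/

open Complex

/-- The holomorphic quadratic parabolic germ `g(z) = z + z²` has
no antiholomorphic square root: there are no open neighborhoods `V ⊆ U` of `0`
and holomorphic `h` on `U` with `h 0 = 0` such that, setting
`f = σ ∘ h` (`f z = conj (h z)`), one has `f z ∈ U` and `f (f z) = z + z²` for
all `z ∈ V`. -/
theorem no_antiholomorphic_square_root_of_quadratic :
    ¬ ∃ (U V : Set ℂ) (h : ℂ → ℂ), IsOpen U ∧ IsOpen V ∧ (0 : ℂ) ∈ V ∧ V ⊆ U ∧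
        DifferentiableOn ℂ h U ∧ h 0 = 0 ∧
        ∀ z ∈ V, (starRingEnd ℂ) (h z) ∈ U ∧
          (starRingEnd ℂ) (h ((starRingEnd ℂ) (h z))) = z + z ^ 2 := by
  rintro ⟨U, V, h, hU, hV, h0V, hVU, hd, h00, hff⟩
  have han : AnalyticAt ℂ h 0 := hd.analyticAt (hU.mem_nhds (hVU h0V))
  have hda : HasDerivAt h (deriv h 0) 0 := han.differentiableAt.hasDerivAt
  -- `f ∘ f` is the composition of the holomorphic germs `conj ∘ h ∘ conj` and `h`
  have hd0 : deriv h 0 ≠ 0 := by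
    intro hzero
    have hk : HasDerivAt ((starRingEnd ℂ) ∘ h ∘ (starRingEnd ℂ))
        ((starRingEnd ℂ) (deriv h 0)) (h 0) := by
      rw [h00]
      have := hda.conj_conj
      simpa using this
    have hc := hk.comp 0 hda
    have he : quadMap =ᶠ[𝓝 0]
        ((starRingEnd ℂ) ∘ h ∘ (starRingEnd ℂ)) ∘ h := by
      filter_upwards [hV.mem_nhds h0V] with z hz
      exact (hff z hz).2.symm
    have := (hasDerivAt_quadMap 0).unique (hc.congr_of_eventuallyEq he)
    rw [hzero] at this
    simp at this
  have hev : ∀ᶠ z in 𝓝 (0 : ℂ), z ∈ V ∧ (starRingEnd ℂ) (h z) ∈ V ∧ deriv h z ≠ 0 := by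
    refine (hV.eventually_mem h0V).and (.and ?_ (han.deriv.continuousAt.eventually_ne hd0))
    have hc : ContinuousAt (fun z => (starRingEnd ℂ) (h z)) 0 :=
      Complex.continuous_conj.continuousAt.comp han.continuousAt
    exact hc.eventually_mem (hV.mem_nhds (by simpa [h00] using h0V))
  obtain ⟨r, hr, hball⟩ := Metric.eventually_nhds_iff_ball.mp hev
  have hcomm : ∀ z ∈ Metric.ball (0 : ℂ) r, h (quadMap z) = quadMap (h z) := by
    intro z hz
    obtain ⟨h1, h2, -⟩ := hball z hz
    have e := (hff _ h2).2
    rw [(hff z h1).2] at e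
    apply (starRingEnd ℂ).injective
    simpa [quadMap] using e
  obtain ⟨a, b, hab⟩ := exists_critical_orbit_shift hr
    (hd.mono fun z hz => hVU (hball z hz).1) hcomm fun z hz => (hball z hz).2.2
  obtain ⟨x, hx, hxc⟩ := critical_orbit_real
  -- `f` sends `c (a + a)` to `c (b + a) = c (a + b)`, and that to `c (b + b)`
  have e := (hff _ (hball _ (hab a).1).1).2
  rw [(hab a).2, hxc (b + a), conj_ofReal, ← hxc, add_comm b a, (hab b).2, hxc (b + b),
    conj_ofReal, ← hxc] at e
  have e' : quadMap^[b + b] (-1 / 2) = quadMap^[a + a + 1] (-1 / 2) := by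
    rw [Function.iterate_succ_apply']
    exact e
  rw [hxc, hxc] at e'
  have := hx.injective (ofReal_injective e')
  omega
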